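/- Let c₁, c₂, c₃ ∈ 𝔽_p and set Ψ₄ = Σ_{a,b ∈ 𝔽_q} Σ_{x ∈ 𝔽_p^*} ζ_p^{x·Tr(a²) − x c₁} Σ_{y ∈ 𝔽_p^*} ζ_p^{y·Tr(b²) − y c₂} Σ_{z ∈ 𝔽_p^*} ζ_p^{z·Tr(ab) − z c₃}. If m is odd, then: Ψ₄ = −p^{−1}(p−1)²G²Ḡ² if c₁ = c₂ = c₃ = 0; Ψ₄ = p^{−1}(p−1)G²Ḡ² if c₁ = c₂ = 0 and c₃ ≠ 0; Ψ₄ = (η̄(−c₂)p^m + p^{−1}GḠ)(p−1)GḠ if c₂ ≠ 0 and c₁ = c₃ = 0; Ψ₄ = −(η̄(−c₂)p^m + p^{−1}GḠ)GḠ if c₁ = 0, c₂ ≠ 0, c₃ ≠ 0; Ψ₄ = (η̄(−c₁)p^m + p^{−1}GḠ)(p−1)GḠ if c₁ ≠ 0 and c₂ = c₃ = 0; Ψ₄ = −(η̄(−c₁)p^m + p^{−1}GḠ)GḠ if c₁ ≠ 0, c₂ = 0, c₃ ≠ 0; Ψ₄ = −(η̄(−c₁)+η̄(−c₂))p^m GḠ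 − (η̄(c₁c₂)+p^{−1})G²Ḡ² if c₁ ≠ 0, c₂ ≠ 0 and c₃ = 0; Ψ₄ = η̄(−c₁)(p−2)p^m GḠ + (p−2−p^{−1})G²Ḡ² if all c_i ≠ 0 and c₃² − c₁c₂ = 0; and Ψ₄ = −(η̄(−c₁)+η̄(−c₂))p^m GḠ − (η̄(c₁c₂)+1+p^{−1})G²Ḡ² if all c_i ≠ 0 and c₃² − c₁c₂ ≠ 0. -/

import Mathlib

open Finset
open scoped Classical

noncomputable section

/-- `ζ_p = exp(2πi/p)`. -/
def zeta (p : ℕ) : ℂ := Complex.exp (2 * Real.pi * Complex.I / p)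

/-- The canonical additive character of `ℤ/p`: `χ̄₁(c) = ζ_p^c`. -/
def chiBar (p : ℕ) (c : ZMod p) : ℂ := zeta p ^ c.val

/-- The quadratic character of `(ℤ/p)^*`, extended by `η̄(0) = 0`. -/
def etaBar (p : ℕ) (c : ZMod p) : ℂ :=
  if c = 0 then 0 else if IsSquare c then 1 else -1

/-- The quadratic character of `F^*`, extended by `η(0) = 0`. -/
def etaQ (F : Type) [Field F] (x : F) : ℂ :=
  if x = 0 then 0 else if IsSquare x then 1 else -1

/-- The absolute trace map from `F` to `ℤ/p`. -/
def Trq (p : ℕ) (F : Type) [Field F] [Algebra (ZMod p) F] (x : F) : ZMod p :=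
  Algebra.trace (ZMod p) F x

/-- The canonical additive character of `F`: `χ₁(x) = ζ_p^{Tr x}`. -/
def chiQ (p : ℕ) (F : Type) [Field F] [Algebra (ZMod p) F] (x : F) : ℂ :=
  chiBar p (Trq p F x)

/-- The quadratic Gauss sum `G` over `F`. -/
def GaussQ (p : ℕ) (F : Type) [Field F] [Fintype F] [Algebra (ZMod p) F] : ℂ :=
  ∑ x ∈ univ.filter (fun x : F => x ≠ 0), etaQ F x * chiQ p F x

/-- The quadratic Gauss sum `Ḡ` over `ℤ/p`. -/
def GaussP (p : ℕ) [NeZero p] : ℂ :=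
  ∑ y ∈ univ.filter (fun y : ZMod p => y ≠ 0), etaBar p y * chiBar p y

/-- The quadratic character with complex values. -/
def qc (K : Type) [Field K] [Fintype K] : MulChar K ℂ :=
  (quadraticChar K).ringHomComp (Int.castRingHom ℂ)

theorem qc_apply (K : Type) [Field K] [Fintype K] (x : K) :
    qc K x = if x = 0 then 0 else if IsSquare x then 1 else -1 := by
  simp only [qc, MulChar.ringHomComp_apply, quadraticChar_apply, quadraticCharFun]
  split_ifs <;> simp

theorem qc_ne_one (K : Type) [Field K] [Fintype K] (h : ringChar K ≠ 2) : qc K ≠ 1 := by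
  obtain ⟨a, ha⟩ := quadraticChar_exists_neg_one' h
  intro H
  have h1 : qc K a = 1 := by rw [H]; simp
  simp only [qc, MulChar.ringHomComp_apply, ha] at h1
  norm_num at h1

theorem qc_quad (K : Type) [Field K] [Fintype K] : (qc K).IsQuadratic :=
  (quadraticChar_isQuadratic K).comp _

theorem qc_sq {K : Type} [Field K] [Fintype K] {x : K} (hx : x ≠ 0) : qc K x * qc K x = 1 := by
  rw [qc_apply, if_neg hx]; split_ifs <;> simp

theorem qc_zero {K : Type} [Field K] [Fintype K] : qc K 0 = 0 := by
  rw [qc_apply]; simp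

theorem qc_shift {K : Type} [Field K] [Fintype K] (h : ringChar K ≠ 2) (ψ : AddChar K ℂ) (w : K) :
    ∑ u : K, qc K u * ψ (u * w) = qc K w * gaussSum (qc K) ψ := by
  by_cases hw : w = 0
  · subst hw
    simp [qc_zero, MulChar.sum_eq_zero_of_ne_one (qc_ne_one K h)]
  · have := gaussSum_mulShift (qc K) ψ (Units.mk0 w hw)
    rw [← this, ← mul_assoc, Units.val_mk0, qc_sq hw, one_mul, gaussSum]
    refine Finset.sum_congr rfl fun u _ => ?_
    rw [AddChar.mulShift_apply, mul_comm u w]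

theorem sum_shift {K : Type} [Field K] [Fintype K] {ψ : AddChar K ℂ} (hψ : ψ.IsPrimitive) (w : K) :
    ∑ u : K, ψ (u * w) = if w = 0 then (Fintype.card K : ℂ) else 0 := by
  rw [AddChar.sum_mulShift w hψ]; split_ifs <;> simp

theorem sum_sq {K : Type} [Field K] [Fintype K] (h : ringChar K ≠ 2) {ψ : AddChar K ℂ}
    (hψ : ψ.IsPrimitive) {w : K} (hw : w ≠ 0) :
    ∑ a : K, ψ (w * a ^ 2) = qc K w * gaussSum (qc K) ψ := by
  have h1 : ∑ a : K, ψ (w * a ^ 2) = ∑ u : K, (qc K u + 1) * ψ (u * w) := by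
    rw [← Finset.sum_fiberwise (s := univ) (g := fun a : K => a ^ 2)]
    refine Finset.sum_congr rfl fun u _ => ?_
    have h2 := quadraticChar_card_sqrts h u
    have h3 : ((#{x : K | x ^ 2 = u}.toFinset : ℕ) : ℂ) = qc K u + 1 := by
      have := congrArg (fun n : ℤ => (n : ℂ)) h2
      simpa [qc] using this
    rw [← h3, ← nsmul_eq_mul, ← Finset.sum_const]
    refine Finset.sum_congr (by ext; simp) fun a ha => ?_
    have : a ^ 2 = u := by simpa using ha
    rw [this, mul_comm]
  rw [h1]
  simp only [add_mul, one_mul, Finset.sum_add_distrib]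
  rw [qc_shift h, sum_shift hψ, if_neg hw, add_zero]

theorem gs_ne_zero {K : Type} [Field K] [Fintype K] (h : ringChar K ≠ 2) {ψ : AddChar K ℂ}
    (hψ : ψ.IsPrimitive) : gaussSum (qc K) ψ ≠ 0 :=
  gaussSum_ne_zero_of_nontrivial (Nat.cast_ne_zero.2 Fintype.card_ne_zero) (qc_ne_one K h) hψ

/-- sum over nonzero elements of an additive character -/
theorem sum_shift_ne {K : Type} [Field K] [Fintype K] {ψ : AddChar K ℂ} (hψ : ψ.IsPrimitive)
    (w : K) : ∑ u ∈ univ.filter (fun u : K => u ≠ 0), ψ (u * w)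
      = if w = 0 then (Fintype.card K : ℂ) - 1 else -1 := by
  have := sum_shift hψ w
  rw [← Finset.sum_filter_add_sum_filter_not univ (fun u : K => u ≠ 0)] at this
  have h2 : univ.filter (fun u : K => ¬ u ≠ 0) = {0} := by ext; simp
  rw [h2, Finset.sum_singleton, zero_mul, AddChar.map_zero_eq_one] at this
  rw [eq_sub_of_add_eq this]
  split_ifs <;> simp

theorem sum_split {K : Type} [Field K] [Fintype K] (f : K → ℂ) :
    ∑ u ∈ univ.filter (fun u : K => u ≠ 0), f u = ∑ u, f u - f 0 := by
  rw [← Finset.sum_filter_add_sum_filter_not univ (fun u : K => u ≠ 0)]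
  have h2 : univ.filter (fun u : K => ¬ u ≠ 0) = {0} := by ext; simp
  rw [h2, Finset.sum_singleton]; ring

theorem sum_ne_of_zero {K : Type} [Field K] [Fintype K] (f : K → ℂ) (hf : f 0 = 0) :
    ∑ u ∈ univ.filter (fun u : K => u ≠ 0), f u = ∑ u, f u := by
  rw [sum_split, hf, sub_zero]

theorem qc_sum_quad {K : Type} [Field K] [Fintype K] (h : ringChar K ≠ 2) {ψ : AddChar K ℂ}
    (hψ : ψ.IsPrimitive) {α : K} (hα : α ≠ 0) (d : K) :
    ∑ t : K, qc K (α * t ^ 2 - d) = qc K α * if d = 0 then (Fintype.card K : ℂ) - 1 else -1 := by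
  have hg := gs_ne_zero h hψ
  apply mul_right_cancel₀ hg
  rw [Finset.sum_mul]
  simp_rw [← qc_shift h ψ]
  rw [Finset.sum_comm]
  have e : ∀ u : K, ∑ t : K, qc K u * ψ (u * (α * t ^ 2 - d))
      = if u = 0 then 0 else qc K α * gaussSum (qc K) ψ * ψ (u * -d) := by
    intro u
    split_ifs with hu
    · simp [hu, qc_zero]
    · have : ∀ t : K, qc K u * ψ (u * (α * t ^ 2 - d))
          = qc K u * ψ (u * -d) * ψ ((u * α) * t ^ 2) := by
        intro t
        rw [mul_assoc, ← AddChar.map_add_eq_mul]; congr 2; ring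
      simp_rw [this]
      rw [← Finset.mul_sum, sum_sq h hψ (mul_ne_zero hu hα), map_mul (qc K) u α]
      linear_combination (ψ (u * -d) * qc K α * gaussSum (qc K) ψ) * qc_sq hu
  simp_rw [e]
  have := sum_shift_ne hψ (-d)
  rw [Finset.sum_filter] at this
  simp only [neg_eq_zero] at this
  rw [mul_right_comm, ← this, Finset.mul_sum]
  refine Finset.sum_congr rfl fun u _ => ?_
  by_cases hu : u = 0 <;> simp [hu]

theorem ml0 {K : Type} [Field K] (a : K) (ha : a ≠ 0) (t : K) :
    Equiv.mulLeft₀ a ha t = a * t := rfl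

theorem S_eval {K : Type} [Field K] [Fintype K] (h : ringChar K ≠ 2) {ψ : AddChar K ℂ}
    (hψ : ψ.IsPrimitive) {X : K} (hX : X ≠ 0) (Y Z : K) :
    ∑ a : K, ∑ b : K, ψ (X * a ^ 2 + Y * b ^ 2 + Z * (a * b))
      = if 4 * X * Y = Z ^ 2 then qc K X * gaussSum (qc K) ψ * Fintype.card K
        else qc K (4 * X * Y - Z ^ 2) * gaussSum (qc K) ψ ^ 2 := by
  have h2 : (2 : K) ≠ 0 := Ring.two_ne_zero h
  have h4 : (4 : K) ≠ 0 := by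
    have : (4 : K) = 2 * 2 := by norm_num
    rw [this]; exact mul_ne_zero h2 h2
  rw [Finset.sum_comm]
  have e : ∀ b : K, ∑ a : K, ψ (X * a ^ 2 + Y * b ^ 2 + Z * (a * b))
      = qc K X * gaussSum (qc K) ψ * ψ (((4 * X * Y - Z ^ 2) / (4 * X)) * b ^ 2) := by
    intro b
    rw [← sum_sq h hψ hX, Finset.sum_mul]
    refine Fintype.sum_equiv (Equiv.addRight (Z * b / (2 * X))) _ _ fun a => ?_
    rw [← AddChar.map_add_eq_mul, Equiv.coe_addRight]
    congr 1
    field_simp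
    ring
  simp_rw [e]
  rw [← Finset.mul_sum]
  split_ifs with hd
  · have : 4 * X * Y - Z ^ 2 = 0 := sub_eq_zero.2 hd
    simp [this]
  · have hd' : 4 * X * Y - Z ^ 2 ≠ 0 := sub_ne_zero.2 hd
    rw [sum_sq h hψ (div_ne_zero hd' (mul_ne_zero h4 hX))]
    have : qc K (4 * X * Y - Z ^ 2) = qc K X * qc K ((4 * X * Y - Z ^ 2) / (4 * X)) := by
      have e1 : 4 * X * Y - Z ^ 2 = X * ((4 * X * Y - Z ^ 2) / (4 * X)) * (2 * 2) := by
        field_simp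
        ring
      conv_lhs => rw [e1]
      rw [map_mul, map_mul, map_mul, qc_sq h2, mul_one]
    rw [this]; ring

/-- the quadratic sum over nonzero `t` -/
def TT (K : Type) [Field K] [Fintype K] (c₁ c₂ c₃ : K) : ℂ :=
  ∑ t ∈ univ.filter (fun t : K => t ≠ 0), qc K (-(c₂ * t ^ 2 + 2 * c₃ * t + c₁))

theorem TT_eval {K : Type} [Field K] [Fintype K] (h : ringChar K ≠ 2) {ψ : AddChar K ℂ}
    (hψ : ψ.IsPrimitive) (c₁ c₂ c₃ : K) :
    TT K c₁ c₂ c₃ = (if c₂ = 0 then (if c₃ = 0 then (Fintype.card K : ℂ) * qc K (-c₁) else 0)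
      else qc K (-c₂) * (if c₃ ^ 2 - c₁ * c₂ = 0 then (Fintype.card K : ℂ) - 1 else -1))
      - qc K (-c₁) := by
  have h2 : (2 : K) ≠ 0 := Ring.two_ne_zero h
  rw [TT, sum_split]
  congr 1
  · split_ifs with h2' h3 hd
    · simp [h2', h3]
    · subst h2'
      rw [← MulChar.sum_eq_zero_of_ne_one (qc_ne_one K h)]
      refine Fintype.sum_equiv ((Equiv.mulLeft₀ (-(2 * c₃)) (neg_ne_zero.2 (mul_ne_zero h2 h3))).trans
        (Equiv.addRight (-c₁))) _ _ fun t => ?_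
      simp only [Equiv.trans_apply, ml0, Equiv.coe_addRight]
      congr 1; ring
    all_goals
      have key := qc_sum_quad h hψ (neg_ne_zero.2 h2') (-((c₃ ^ 2 - c₁ * c₂) / c₂))
      have e : ∑ t : K, qc K (-(c₂ * t ^ 2 + 2 * c₃ * t + c₁))
          = ∑ t : K, qc K (-c₂ * t ^ 2 - -((c₃ ^ 2 - c₁ * c₂) / c₂)) := by
        refine Fintype.sum_equiv (Equiv.addRight (c₃ / c₂)) _ _ fun t => ?_
        rw [Equiv.coe_addRight]
        congr 1; field_simp; ring
      rw [e, key]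
      simp [hd, h2']
  · congr 1; ring

theorem ysum {K : Type} [Field K] [Fintype K] (h : ringChar K ≠ 2) (ψ : AddChar K ℂ)
    (G q : ℂ) (c₁ c₂ c₃ : K) {x z : K} (hx : x ≠ 0) (hz : z ≠ 0) :
    ∑ y ∈ univ.filter (fun y : K => y ≠ 0), ψ (-(x * c₁) - y * c₂ - z * c₃) *
      (if 4 * x * y = z ^ 2 then qc K x * G * q else qc K (4 * x * y - z ^ 2) * G ^ 2)
    = (q * G + G ^ 2 * qc K (-c₂) * gaussSum (qc K) ψ)
        * (qc K x * ψ (-(x * c₁) - z ^ 2 / (4 * x) * c₂ - z * c₃))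
      - qc K (-1) * G ^ 2 * (ψ (x * -c₁) * ψ (z * -c₃)) := by
  have h2 : (2 : K) ≠ 0 := Ring.two_ne_zero h
  have h4 : (4 : K) ≠ 0 := by
    have : (4 : K) = 2 * 2 := by norm_num
    rw [this]; exact mul_ne_zero h2 h2
  have q4 : qc K 4 = 1 := by
    have : (4 : K) = 2 * 2 := by norm_num
    rw [this, map_mul, qc_sq h2]
  have e : ∀ y : K, ψ (-(x * c₁) - y * c₂ - z * c₃) *
      (if 4 * x * y = z ^ 2 then qc K x * G * q else qc K (4 * x * y - z ^ 2) * G ^ 2)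
      = (if y = z ^ 2 / (4 * x) then
          q * G * (qc K x * ψ (-(x * c₁) - z ^ 2 / (4 * x) * c₂ - z * c₃)) else 0)
        + G ^ 2 * (qc K (4 * x * y - z ^ 2) * ψ (-(x * c₁) - y * c₂ - z * c₃)) := by
    intro y
    have hiff : 4 * x * y = z ^ 2 ↔ y = z ^ 2 / (4 * x) := by
      rw [eq_div_iff (mul_ne_zero h4 hx), mul_comm]
    by_cases hy : y = z ^ 2 / (4 * x)
    · have hy' := hiff.2 hy
      rw [if_pos hy', if_pos hy, sub_eq_zero.2 hy', qc_zero, ← hy]; ring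
    · rw [if_neg hy, if_neg (fun hh => hy (hiff.1 hh))]; ring
  rw [sum_split]
  simp_rw [e]
  rw [Finset.sum_add_distrib, Finset.sum_ite_eq' univ, if_pos (mem_univ _), ← Finset.mul_sum]
  have hne : (0 : K) ≠ z ^ 2 / (4 * x) :=
    (div_ne_zero (pow_ne_zero 2 hz) (mul_ne_zero h4 hx)).symm
  rw [if_neg hne]
  have e2 : ∑ y : K, qc K (4 * x * y - z ^ 2) * ψ (-(x * c₁) - y * c₂ - z * c₃)
      = qc K (-c₂) * gaussSum (qc K) ψ *
        (qc K x * ψ (-(x * c₁) - z ^ 2 / (4 * x) * c₂ - z * c₃)) := by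
    have q5 : qc K (-c₂ / (4 * x)) = qc K (-c₂) * qc K x := by
      have : qc K (-c₂) = qc K (-c₂ / (4 * x)) * (qc K 4 * qc K x) := by
        rw [← map_mul, ← map_mul, div_mul_cancel₀ _ (mul_ne_zero h4 hx)]
      rw [this, q4, one_mul, mul_assoc, qc_sq hx, mul_one]
    have := qc_shift h ψ (-c₂ / (4 * x))
    rw [q5] at this
    have e3 : qc K (-c₂) * gaussSum (qc K) ψ *
        (qc K x * ψ (-(x * c₁) - z ^ 2 / (4 * x) * c₂ - z * c₃))
        = (qc K (-c₂) * qc K x * gaussSum (qc K) ψ) *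
          ψ (-(x * c₁) - z ^ 2 / (4 * x) * c₂ - z * c₃) := by ring
    rw [e3, ← this, Finset.sum_mul]
    refine Fintype.sum_equiv ((Equiv.mulLeft₀ (4 * x) (mul_ne_zero h4 hx)).trans
        (Equiv.addRight (-z ^ 2))) _ _ fun t => ?_
    simp only [Equiv.trans_apply, ml0, Equiv.coe_addRight]
    rw [mul_assoc (qc K _), ← AddChar.map_add_eq_mul]
    congr 2
    · ring
    · field_simp; ring
  rw [e2]
  have e4 : qc K (4 * x * 0 - z ^ 2) = qc K (-1) := by
    have : 4 * x * 0 - z ^ 2 = -1 * (z * z) := by ring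
    rw [this, map_mul, map_mul, qc_sq hz, mul_one]
  have e5 : ψ (-(x * c₁) - 0 * c₂ - z * c₃) = ψ (x * -c₁) * ψ (z * -c₃) := by
    rw [← AddChar.map_add_eq_mul]; congr 1; ring
  rw [e4, e5]; ring

theorem A_eval {K : Type} [Field K] [Fintype K] (h : ringChar K ≠ 2) (ψ : AddChar K ℂ)
    (c₁ c₂ c₃ : K) :
    ∑ x ∈ univ.filter (fun x : K => x ≠ 0), ∑ z ∈ univ.filter (fun z : K => z ≠ 0),
      qc K x * ψ (-(x * c₁) - z ^ 2 / (4 * x) * c₂ - z * c₃)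
    = gaussSum (qc K) ψ * TT K c₁ c₂ c₃ := by
  have h2 : (2 : K) ≠ 0 := Ring.two_ne_zero h
  have h4 : (4 : K) ≠ 0 := by
    have : (4 : K) = 2 * 2 := by norm_num
    rw [this]; exact mul_ne_zero h2 h2
  have e : ∀ x ∈ univ.filter (fun x : K => x ≠ 0), ∑ z ∈ univ.filter (fun z : K => z ≠ 0),
      qc K x * ψ (-(x * c₁) - z ^ 2 / (4 * x) * c₂ - z * c₃)
      = ∑ t ∈ univ.filter (fun t : K => t ≠ 0),
        qc K x * ψ (x * (-(c₂ * t ^ 2 + 2 * c₃ * t + c₁))) := by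
    intro x hx
    have hx : x ≠ 0 := by simpa using hx
    refine Finset.sum_nbij' (fun z => z / (2 * x)) (fun t => t * (2 * x)) ?_ ?_ ?_ ?_ ?_
    · intro z hz; simp at hz ⊢; exact ⟨hz, h2, hx⟩
    · intro z hz; simp at hz ⊢; exact ⟨hz, h2, hx⟩
    · intro z _; field_simp
    · intro z _; field_simp
    · intro z _
      congr 2
      field_simp
      ring
  rw [Finset.sum_congr rfl e, Finset.sum_comm, TT, Finset.mul_sum]
  refine Finset.sum_congr rfl fun t _ => ?_
  rw [sum_ne_of_zero _ (by simp [qc_zero]), qc_shift h, mul_comm]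

theorem core {K : Type} [Field K] [Fintype K] (h : ringChar K ≠ 2) {ψ : AddChar K ℂ}
    (hψ : ψ.IsPrimitive) (G q : ℂ) (c₁ c₂ c₃ : K) :
    ∑ x ∈ univ.filter (fun x : K => x ≠ 0), ∑ z ∈ univ.filter (fun z : K => z ≠ 0),
    ∑ y ∈ univ.filter (fun y : K => y ≠ 0), ψ (-(x * c₁) - y * c₂ - z * c₃) *
      (if 4 * x * y = z ^ 2 then qc K x * G * q else qc K (4 * x * y - z ^ 2) * G ^ 2)
    = (q * G + G ^ 2 * qc K (-c₂) * gaussSum (qc K) ψ) * (gaussSum (qc K) ψ * TT K c₁ c₂ c₃)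
      - qc K (-1) * G ^ 2 * ((if c₁ = 0 then (Fintype.card K : ℂ) - 1 else -1) *
          (if c₃ = 0 then (Fintype.card K : ℂ) - 1 else -1)) := by
  have e := fun (x : K) (hx : x ∈ univ.filter (fun x : K => x ≠ 0)) =>
    Finset.sum_congr (rfl : univ.filter (fun x : K => x ≠ 0) = _)
      (fun (z : K) (hz : z ∈ univ.filter (fun x : K => x ≠ 0)) =>
      ysum h ψ G q c₁ c₂ c₃ (x := x) (z := z) (by simpa using hx) (by simpa using hz))
  rw [Finset.sum_congr rfl e]
  simp only [Finset.sum_sub_distrib, ← Finset.mul_sum]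
  have e1 := A_eval h ψ c₁ c₂ c₃
  simp only [← Finset.mul_sum] at e1
  rw [e1]
  congr 2
  rw [← Finset.sum_mul, sum_shift_ne hψ, sum_shift_ne hψ]
  simp

theorem chiBar_eq (p : ℕ) [Fact (Nat.Prime p)] (c : ZMod p) :
    chiBar p c = (ZMod.stdAddChar (N := p)) c := by
  have := ZMod.stdAddChar_coe (N := p) (c.val : ℤ)
  rw [Int.cast_natCast, ZMod.natCast_zmod_val] at this
  rw [this, chiBar, zeta, ← Complex.exp_nat_mul]
  congr 1
  push_cast
  ring

theorem etaBar_eq (p : ℕ) [Fact (Nat.Prime p)] (c : ZMod p) : etaBar p c = qc (ZMod p) c := by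
  rw [qc_apply, etaBar]
  split_ifs <;> rfl

theorem etaQ_eq (F : Type) [Field F] [Fintype F] (c : F) : etaQ F c = qc F c := by
  rw [qc_apply, etaQ]
  split_ifs <;> rfl

/-- The canonical additive character of `F`. -/
def psiF (p : ℕ) [Fact (Nat.Prime p)] (F : Type) [Field F] [Algebra (ZMod p) F] :
    AddChar F ℂ :=
  (ZMod.stdAddChar (N := p)).compAddMonoidHom (Algebra.trace (ZMod p) F).toAddMonoidHom

theorem psiF_apply (p : ℕ) [Fact (Nat.Prime p)] (F : Type) [Field F] [Algebra (ZMod p) F] (x : F) :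
    psiF p F x = (ZMod.stdAddChar (N := p)) (Trq p F x) := rfl

theorem psiF_prim (p : ℕ) [Fact (Nat.Prime p)] (F : Type) [Field F] [Fintype F]
    [Algebra (ZMod p) F] : (psiF p F).IsPrimitive := by
  intro a ha H
  obtain ⟨t, ht⟩ := Algebra.trace_surjective (ZMod p) F 1
  have h1 : AddChar.mulShift (psiF p F) a (t / a) = 1 := by rw [H]; simp
  rw [AddChar.mulShift_apply, mul_div_cancel₀ _ ha, psiF_apply, Trq, ht] at h1
  have := ZMod.isPrimitive_stdAddChar p (one_ne_zero)
  apply this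
  ext x
  rw [AddChar.mulShift_apply, one_mul, ← ZMod.natCast_zmod_val x, ← nsmul_one,
    AddChar.map_nsmul_eq_pow, h1, one_pow]
  simp

theorem GaussQ_eq (p : ℕ) [Fact (Nat.Prime p)] (F : Type) [Field F] [Fintype F]
    [Algebra (ZMod p) F] : GaussQ p F = gaussSum (qc F) (psiF p F) := by
  rw [GaussQ, gaussSum]
  simp only [etaQ_eq, chiQ, chiBar_eq, ← psiF_apply]
  convert sum_ne_of_zero (K := F) (fun x => qc F x * psiF p F x) (by simp [qc_zero])

theorem GaussP_eq (p : ℕ) [Fact (Nat.Prime p)] :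
    GaussP p = gaussSum (qc (ZMod p)) (ZMod.stdAddChar (N := p)) := by
  rw [GaussP, gaussSum]
  simp only [etaBar_eq, chiBar_eq]
  convert sum_ne_of_zero (K := ZMod p)
    (fun x => qc (ZMod p) x * (ZMod.stdAddChar (N := p)) x) (by simp [qc_zero])

theorem ringChar_F (p : ℕ) [Fact (Nat.Prime p)] (hp : Odd p) (F : Type) [Field F]
    [Algebra (ZMod p) F] : ringChar F ≠ 2 := by
  have : CharP F p := charP_of_injective_algebraMap (algebraMap (ZMod p) F).injective p
  rw [ringChar.eq F p] 
  rintro rfl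
  exact absurd hp (by decide)

theorem qc_lift (p m : ℕ) [Fact (Nat.Prime p)] (hp : Odd p)
    (F : Type) [Field F] [Fintype F] [Algebra (ZMod p) F]
    (hq : Fintype.card F = p ^ m) (hmodd : Odd m) (x : ZMod p) :
    qc F (algebraMap (ZMod p) F x) = qc (ZMod p) x := by
  by_cases hx : x = 0
  · simp [hx, qc_zero]
  have hx' : algebraMap (ZMod p) F x ≠ 0 := by simpa using hx
  have hF := ringChar_F p hp F
  have hP := ringChar_F p hp (ZMod p)
  obtain ⟨N, hN, hN'⟩ : ∃ N : ℕ, Odd N ∧ p ^ m / 2 = p / 2 * N := by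
    refine ⟨∑ i ∈ range m, p ^ i, ?_, ?_⟩
    · rw [Finset.odd_sum_iff_odd_card_odd]
      have : (range m).filter (fun i => Odd (p ^ i)) = range m :=
        Finset.filter_true_of_mem fun i _ => hp.pow
      simpa [this] using hmodd
    · have h1 := Nat.geomSum_eq (m := p) (Fact.out : Nat.Prime p).two_le m
      have h3 := Nat.geomSum_eq (m := p) (Fact.out : Nat.Prime p).two_le m
      have h2 : (p - 1) * ∑ i ∈ range m, p ^ i = p ^ m - 1 := by
        have := mul_geom_sum (p : ℤ) m
        have hp1 := (Fact.out : Nat.Prime p).one_le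
        have hp2 : 1 ≤ p ^ m := Nat.one_le_pow _ _ hp1
        zify [hp1, hp2]; exact this
      obtain ⟨k, hk⟩ := hp
      have hk2 : p / 2 = k := by omega
      have hk3 : p - 1 = 2 * k := by omega
      rw [hk3, mul_assoc] at h2
      rw [hk2]
      have hodd : Odd (p ^ m) := Odd.pow ⟨k, hk⟩
      obtain ⟨j, hj⟩ := hodd
      omega
  have key : IsSquare (algebraMap (ZMod p) F x) ↔ IsSquare x := by
    rw [FiniteField.isSquare_iff hF hx', FiniteField.isSquare_iff hP hx, hq, ZMod.card, hN',
      ← map_pow, map_eq_one_iff _ (algebraMap (ZMod p) F).injective, pow_mul]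
    have hd := FiniteField.pow_dichotomy hP hx
    rw [ZMod.card] at hd
    rcases hd with hd | hd
    · simp [hd]
    · rw [hd, hN.neg_one_pow]
  rw [qc_apply, qc_apply]
  rw [if_neg hx', if_neg hx]
  simp only [key]
  split_ifs <;> rfl

theorem Psi4_formula (p m : ℕ) [Fact (Nat.Prime p)] (hp : Odd p)
    (F : Type) [Field F] [Fintype F] [Algebra (ZMod p) F]
    (hq : Fintype.card F = p ^ m)
    (hmodd : Odd m) (c₁ c₂ c₃ : ZMod p) :
      (∑ a : F, ∑ b : F,
      (∑ x ∈ univ.filter (fun x : ZMod p => x ≠ 0), chiBar p (x * Trq p F (a ^ 2) - x * c₁)) *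
      (∑ y ∈ univ.filter (fun y : ZMod p => y ≠ 0), chiBar p (y * Trq p F (b ^ 2) - y * c₂)) *
      (∑ z ∈ univ.filter (fun z : ZMod p => z ≠ 0), chiBar p (z * Trq p F (a * b) - z * c₃)))
    = ((p : ℂ) ^ m * GaussQ p F + GaussQ p F ^ 2 * etaBar p (-c₂) * GaussP p) * (GaussP p *
      ((if c₂ = 0 then (if c₃ = 0 then (p : ℂ) * etaBar p (-c₁) else 0)
      else etaBar p (-c₂) * (if c₃ ^ 2 - c₁ * c₂ = 0 then (p : ℂ) - 1 else -1))
      - etaBar p (-c₁)))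
      - (p : ℂ)⁻¹ * GaussP p ^ 2 * GaussQ p F ^ 2 * ((if c₁ = 0 then (p : ℂ) - 1 else -1) *
          (if c₃ = 0 then (p : ℂ) - 1 else -1)) := by
  have hF := ringChar_F p hp F
  have hP := ringChar_F p hp (ZMod p)
  have hψ := ZMod.isPrimitive_stdAddChar p
  have hp0 : (p : ℂ) ≠ 0 := Nat.cast_ne_zero.2 (Fact.out : Nat.Prime p).ne_zero
  have hG2 : (p : ℂ)⁻¹ * GaussP p ^ 2 = qc (ZMod p) (-1) := by
    rw [GaussP_eq, gaussSum_sq (qc_ne_one _ hP) (qc_quad _) hψ, ZMod.card]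
    field_simp
  rw [hG2]
  have hc := core hP hψ (GaussQ p F) ((p : ℂ) ^ m) c₁ c₂ c₃
  rw [TT_eval hP hψ, ZMod.card, ← GaussP_eq] at hc
  simp only [etaBar_eq]
  have hS : ∀ x y z : ZMod p, x ≠ 0 → ∑ a : F, ∑ b : F,
      (ZMod.stdAddChar (N := p)) (x * Trq p F (a ^ 2) + y * Trq p F (b ^ 2) + z * Trq p F (a * b))
      = if 4 * x * y = z ^ 2 then qc (ZMod p) x * GaussQ p F * (p : ℂ) ^ m
        else qc (ZMod p) (4 * x * y - z ^ 2) * GaussQ p F ^ 2 := by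
    intro x y z hx
    have hx' : algebraMap (ZMod p) F x ≠ 0 := by simpa using hx
    have := S_eval hF (psiF_prim p F) hx' (algebraMap (ZMod p) F y) (algebraMap (ZMod p) F z)
    rw [← GaussQ_eq, hq, qc_lift p m hp F hq hmodd] at this
    have e1 : 4 * algebraMap (ZMod p) F x * algebraMap (ZMod p) F y
        = algebraMap (ZMod p) F (4 * x * y) := by
      rw [map_mul, map_mul, map_ofNat]
    rw [e1, ← map_pow, ← map_sub, qc_lift p m hp F hq hmodd,
      (algebraMap (ZMod p) F).injective.eq_iff] at this
    have e2 : ∀ a b : F, psiF p F (algebraMap (ZMod p) F x * a ^ 2 + algebraMap (ZMod p) F y * b ^ 2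
        + algebraMap (ZMod p) F z * (a * b)) = (ZMod.stdAddChar (N := p))
          (x * Trq p F (a ^ 2) + y * Trq p F (b ^ 2) + z * Trq p F (a * b)) := by
      intro a b
      rw [psiF_apply]
      simp only [Trq, ← Algebra.smul_def, map_add, map_smul, smul_eq_mul]
    simp only [e2] at this
    rw [this]
    push_cast
    split_ifs <;> rfl
  have main : (∑ a : F, ∑ b : F,
      (∑ x ∈ univ.filter (fun x : ZMod p => x ≠ 0), chiBar p (x * Trq p F (a ^ 2) - x * c₁)) *
      (∑ y ∈ univ.filter (fun y : ZMod p => y ≠ 0), chiBar p (y * Trq p F (b ^ 2) - y * c₂)) *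
      (∑ z ∈ univ.filter (fun z : ZMod p => z ≠ 0), chiBar p (z * Trq p F (a * b) - z * c₃)))
      = ∑ x ∈ univ.filter (fun x : ZMod p => x ≠ 0), ∑ z ∈ univ.filter (fun z : ZMod p => z ≠ 0),
        ∑ y ∈ univ.filter (fun y : ZMod p => y ≠ 0),
        (ZMod.stdAddChar (N := p)) (-(x * c₁) - y * c₂ - z * c₃) *
      (if 4 * x * y = z ^ 2 then qc (ZMod p) x * GaussQ p F * (p : ℂ) ^ m
        else qc (ZMod p) (4 * x * y - z ^ 2) * GaussQ p F ^ 2) := by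
    have e1 : ∀ a b : F,
      (∑ x ∈ univ.filter (fun x : ZMod p => x ≠ 0), chiBar p (x * Trq p F (a ^ 2) - x * c₁)) *
      (∑ y ∈ univ.filter (fun y : ZMod p => y ≠ 0), chiBar p (y * Trq p F (b ^ 2) - y * c₂)) *
      (∑ z ∈ univ.filter (fun z : ZMod p => z ≠ 0), chiBar p (z * Trq p F (a * b) - z * c₃))
      = ∑ x ∈ univ.filter (fun x : ZMod p => x ≠ 0), ∑ z ∈ univ.filter (fun z : ZMod p => z ≠ 0),
        ∑ y ∈ univ.filter (fun y : ZMod p => y ≠ 0),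
        (ZMod.stdAddChar (N := p)) (-(x * c₁) - y * c₂ - z * c₃) * (ZMod.stdAddChar (N := p))
          (x * Trq p F (a ^ 2) + y * Trq p F (b ^ 2) + z * Trq p F (a * b)) := by
      intro a b
      rw [mul_assoc, Finset.sum_mul]
      refine Finset.sum_congr rfl fun x _ => ?_
      rw [Finset.sum_mul_sum, Finset.mul_sum, Finset.sum_comm]
      refine Finset.sum_congr rfl fun y _ => ?_
      rw [Finset.mul_sum]
      refine Finset.sum_congr rfl fun z _ => ?_
      simp only [chiBar_eq, ← AddChar.map_add_eq_mul]
      congr 1; ring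
    simp only [e1]
    have e2 : ∀ (U : Finset (ZMod p)) (f : F → F → ZMod p → ℂ),
        ∑ a : F, ∑ b : F, ∑ x ∈ U, f a b x = ∑ x ∈ U, ∑ a : F, ∑ b : F, f a b x := by
      intro U f
      rw [Finset.sum_comm (s := U)]
      refine Finset.sum_congr rfl fun a _ => ?_
      rw [Finset.sum_comm]
    rw [e2]
    refine Finset.sum_congr rfl fun x hx => ?_
    rw [e2]
    refine Finset.sum_congr rfl fun z _ => ?_
    rw [e2]
    refine Finset.sum_congr rfl fun y _ => ?_
    rw [← hS x y z (by simpa using hx)]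
    simp only [Finset.mul_sum]
  rw [main]
  convert hc

theorem Psi4_eval_m_odd (p m : ℕ) [Fact (Nat.Prime p)] (hp : Odd p)
    (F : Type) [Field F] [Fintype F] [Algebra (ZMod p) F]
    (hm : 0 < m) (hq : Fintype.card F = p ^ m)
    (hmodd : Odd m) (c₁ c₂ c₃ : ZMod p) :
    (c₁ = 0 ∧ c₂ = 0 ∧ c₃ = 0 →
      (∑ a : F, ∑ b : F,
      (∑ x ∈ univ.filter (fun x : ZMod p => x ≠ 0), chiBar p (x * Trq p F (a ^ 2) - x * c₁)) *
      (∑ y ∈ univ.filter (fun y : ZMod p => y ≠ 0), chiBar p (y * Trq p F (b ^ 2) - y * c₂)) *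
      (∑ z ∈ univ.filter (fun z : ZMod p => z ≠ 0), chiBar p (z * Trq p F (a * b) - z * c₃))) = -((p : ℂ)⁻¹ * ((p : ℂ) - 1) ^ 2 * (GaussQ p F) ^ 2 * (GaussP p) ^ 2)) ∧
    (c₁ = 0 ∧ c₂ = 0 ∧ c₃ ≠ 0 →
      (∑ a : F, ∑ b : F,
      (∑ x ∈ univ.filter (fun x : ZMod p => x ≠ 0), chiBar p (x * Trq p F (a ^ 2) - x * c₁)) *
      (∑ y ∈ univ.filter (fun y : ZMod p => y ≠ 0), chiBar p (y * Trq p F (b ^ 2) - y * c₂)) *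
      (∑ z ∈ univ.filter (fun z : ZMod p => z ≠ 0), chiBar p (z * Trq p F (a * b) - z * c₃))) = (p : ℂ)⁻¹ * ((p : ℂ) - 1) * (GaussQ p F) ^ 2 * (GaussP p) ^ 2) ∧
    (c₂ ≠ 0 ∧ c₁ = 0 ∧ c₃ = 0 →
      (∑ a : F, ∑ b : F,
      (∑ x ∈ univ.filter (fun x : ZMod p => x ≠ 0), chiBar p (x * Trq p F (a ^ 2) - x * c₁)) *
      (∑ y ∈ univ.filter (fun y : ZMod p => y ≠ 0), chiBar p (y * Trq p F (b ^ 2) - y * c₂)) *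
      (∑ z ∈ univ.filter (fun z : ZMod p => z ≠ 0), chiBar p (z * Trq p F (a * b) - z * c₃))) = (etaBar p (-c₂) * (p : ℂ) ^ m + (p : ℂ)⁻¹ * GaussQ p F * GaussP p) * ((p : ℂ) - 1) * (GaussQ p F * GaussP p)) ∧
    (c₁ = 0 ∧ c₂ ≠ 0 ∧ c₃ ≠ 0 →
      (∑ a : F, ∑ b : F,
      (∑ x ∈ univ.filter (fun x : ZMod p => x ≠ 0), chiBar p (x * Trq p F (a ^ 2) - x * c₁)) *
      (∑ y ∈ univ.filter (fun y : ZMod p => y ≠ 0), chiBar p (y * Trq p F (b ^ 2) - y * c₂)) *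
      (∑ z ∈ univ.filter (fun z : ZMod p => z ≠ 0), chiBar p (z * Trq p F (a * b) - z * c₃))) = -((etaBar p (-c₂) * (p : ℂ) ^ m + (p : ℂ)⁻¹ * GaussQ p F * GaussP p) * (GaussQ p F * GaussP p))) ∧
    (c₁ ≠ 0 ∧ c₂ = 0 ∧ c₃ = 0 →
      (∑ a : F, ∑ b : F,
      (∑ x ∈ univ.filter (fun x : ZMod p => x ≠ 0), chiBar p (x * Trq p F (a ^ 2) - x * c₁)) *
      (∑ y ∈ univ.filter (fun y : ZMod p => y ≠ 0), chiBar p (y * Trq p F (b ^ 2) - y * c₂)) *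
      (∑ z ∈ univ.filter (fun z : ZMod p => z ≠ 0), chiBar p (z * Trq p F (a * b) - z * c₃))) = (etaBar p (-c₁) * (p : ℂ) ^ m + (p : ℂ)⁻¹ * GaussQ p F * GaussP p) * ((p : ℂ) - 1) * (GaussQ p F * GaussP p)) ∧
    (c₁ ≠ 0 ∧ c₂ = 0 ∧ c₃ ≠ 0 →
      (∑ a : F, ∑ b : F,
      (∑ x ∈ univ.filter (fun x : ZMod p => x ≠ 0), chiBar p (x * Trq p F (a ^ 2) - x * c₁)) *
      (∑ y ∈ univ.filter (fun y : ZMod p => y ≠ 0), chiBar p (y * Trq p F (b ^ 2) - y * c₂)) *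
      (∑ z ∈ univ.filter (fun z : ZMod p => z ≠ 0), chiBar p (z * Trq p F (a * b) - z * c₃))) = -((etaBar p (-c₁) * (p : ℂ) ^ m + (p : ℂ)⁻¹ * GaussQ p F * GaussP p) * (GaussQ p F * GaussP p))) ∧
    (c₁ ≠ 0 ∧ c₂ ≠ 0 ∧ c₃ = 0 →
      (∑ a : F, ∑ b : F,
      (∑ x ∈ univ.filter (fun x : ZMod p => x ≠ 0), chiBar p (x * Trq p F (a ^ 2) - x * c₁)) *
      (∑ y ∈ univ.filter (fun y : ZMod p => y ≠ 0), chiBar p (y * Trq p F (b ^ 2) - y * c₂)) *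
      (∑ z ∈ univ.filter (fun z : ZMod p => z ≠ 0), chiBar p (z * Trq p F (a * b) - z * c₃))) = -((etaBar p (-c₁) + etaBar p (-c₂)) * (p : ℂ) ^ m * (GaussQ p F * GaussP p)) - (etaBar p (c₁ * c₂) + (p : ℂ)⁻¹) * (GaussQ p F) ^ 2 * (GaussP p) ^ 2) ∧
    ((c₁ ≠ 0 ∧ c₂ ≠ 0 ∧ c₃ ≠ 0) ∧ c₃ ^ 2 - c₁ * c₂ = 0 →
      (∑ a : F, ∑ b : F,
      (∑ x ∈ univ.filter (fun x : ZMod p => x ≠ 0), chiBar p (x * Trq p F (a ^ 2) - x * c₁)) *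
      (∑ y ∈ univ.filter (fun y : ZMod p => y ≠ 0), chiBar p (y * Trq p F (b ^ 2) - y * c₂)) *
      (∑ z ∈ univ.filter (fun z : ZMod p => z ≠ 0), chiBar p (z * Trq p F (a * b) - z * c₃))) = etaBar p (-c₁) * ((p : ℂ) - 2) * (p : ℂ) ^ m * (GaussQ p F * GaussP p) + ((p : ℂ) - 2 - (p : ℂ)⁻¹) * (GaussQ p F) ^ 2 * (GaussP p) ^ 2) ∧
    ((c₁ ≠ 0 ∧ c₂ ≠ 0 ∧ c₃ ≠ 0) ∧ c₃ ^ 2 - c₁ * c₂ ≠ 0 →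
      (∑ a : F, ∑ b : F,
      (∑ x ∈ univ.filter (fun x : ZMod p => x ≠ 0), chiBar p (x * Trq p F (a ^ 2) - x * c₁)) *
      (∑ y ∈ univ.filter (fun y : ZMod p => y ≠ 0), chiBar p (y * Trq p F (b ^ 2) - y * c₂)) *
      (∑ z ∈ univ.filter (fun z : ZMod p => z ≠ 0), chiBar p (z * Trq p F (a * b) - z * c₃))) = -((etaBar p (-c₁) + etaBar p (-c₂)) * (p : ℂ) ^ m * (GaussQ p F * GaussP p)) - (etaBar p (c₁ * c₂) + 1 + (p : ℂ)⁻¹) * (GaussQ p F) ^ 2 * (GaussP p) ^ 2) := by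
  have hform := Psi4_formula p m hp F hq hmodd c₁ c₂ c₃
  have hp0 : (p : ℂ) ≠ 0 := Nat.cast_ne_zero.2 (Fact.out : Nat.Prime p).ne_zero
  have z0 : etaBar p (-0) = 0 := by simp [etaBar]
  have hmul : ∀ a b : ZMod p, etaBar p (a * b) = etaBar p (-a) * etaBar p (-b) := by
    intro a b
    rw [etaBar_eq, etaBar_eq, etaBar_eq, ← map_mul, neg_mul_neg]
  have hsq : ∀ a : ZMod p, a ≠ 0 → etaBar p (-a) * etaBar p (-a) = 1 := by
    intro a ha
    rw [etaBar_eq, qc_sq (neg_ne_zero.2 ha)]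
  rw [hform]
  generalize GaussQ p F = G
  generalize GaussP p = g
  clear hform
  refine ⟨?_, ?_, ?_, ?_, ?_, ?_, ?_, ?_, ?_⟩
  · rintro ⟨rfl, rfl, rfl⟩
    simp only [z0, if_true]; ring
  · rintro ⟨rfl, rfl, h3⟩
    simp only [z0, if_true, if_neg h3]; ring
  · rintro ⟨h2, rfl, rfl⟩
    have hd : (0 : ZMod p) ^ 2 - 0 * c₂ = 0 := by ring
    simp only [z0, if_true, if_neg h2, if_pos hd]
    have := hsq c₂ h2
    field_simp
    linear_combination (p * g ^ 2 * G ^ 2 * (p - 1)) * this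
  · rintro ⟨rfl, h2, h3⟩
    have hd : ¬ (c₃ ^ 2 - 0 * c₂ = 0) := by simpa using h3
    simp only [z0, if_true, if_neg h2, if_neg h3, if_neg hd]
    have := hsq c₂ h2
    field_simp
    linear_combination (-p * g ^ 2 * G ^ 2) * this
  · rintro ⟨h1, rfl, rfl⟩
    simp only [z0, if_true, if_neg h1]; field_simp; ring
  · rintro ⟨h1, rfl, h3⟩
    simp only [z0, if_true, if_neg h1, if_neg h3]; field_simp; ring
  · rintro ⟨h1, h2, rfl⟩
    have hd : ¬ ((0 : ZMod p) ^ 2 - c₁ * c₂ = 0) := by simp [h1, h2]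
    simp only [if_true, if_neg h1, if_neg h2, if_neg hd, hmul]
    have := hsq c₂ h2
    field_simp
    linear_combination (-p * g ^ 2 * G ^ 2) * this
  · rintro ⟨⟨h1, h2, h3⟩, hd⟩
    simp only [if_neg h1, if_neg h2, if_neg h3, if_pos hd]
    have h5 := hsq c₂ h2
    have h6 : etaBar p (-c₁) * etaBar p (-c₂) = 1 := by
      rw [← hmul, ← sub_eq_zero.1 hd, etaBar_eq, pow_two, map_mul, qc_sq h3]
    have h7 : etaBar p (-c₁) = etaBar p (-c₂) := by
      linear_combination etaBar p (-c₂) * h6 - etaBar p (-c₁) * h5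
    rw [h7]
    field_simp
    linear_combination (p * g ^ 2 * G ^ 2 * (p - 2)) * h5
  · rintro ⟨⟨h1, h2, h3⟩, hd⟩
    simp only [if_neg h1, if_neg h2, if_neg h3, if_neg hd, hmul]
    have := hsq c₂ h2
    field_simp
    linear_combination (-p * g ^ 2 * G ^ 2) * this
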